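/- Consider two SIMO cyclic-prefix systems over the same quasi-static frequency-selective channel with memory ν and N receive antennas, with data block lengths L_{d1} and L_{d2} satisfying ν+1 ≤ L_{d1} ≤ L_{d2}. For every real m with 0 < m < L_{d1}, the probabilities P(Σ_{q=1}^{L_{d1}} 1/(1+ρλ_q^{(1)}) > m) and P(Σ_{q=1}^{L_{d2}} 1/(1+ρλ_q^{(2)}) > m) are exponentially equal as ρ → ∞: the limits of log P / log ρ coincide. -/

import Mathlib

/-!
The exponent is computed explicitly: for every block length `Ld ≥ ν + 1` with `m < Ld`, the tail
probability is of exponential order `ρ ^ (-r N)` with `r = min ⌊m⌋ ν + 1`, in which `Ld` does not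
appear (`tendsto_tailProb`).

The eigenvalues are the squared norms of `N` independent random polynomials of degree at most `ν`
evaluated at the `Ld`-th roots of unity. Evaluation at any `ν + 1` distinct roots is a linear
automorphism (Vandermonde, `sampleMap_injective`), so up to constants the values there may be
treated as independent Gaussians: the law of the image has a density at most a constant times an
isotropic Gaussian weight (`matrixLaw_preimage_le`) and bounded below on bounded sets
(`le_matrixLaw_preimage`).

Upper bound. If `∑ 1 / (1 + ρ λ_q) > m`, the `r` smallest eigenvalues have product at most
`C ρ ^ (-r)` (`prod_le_of_sum_lt`). For integer `m` the sum can exceed `m` with fewer than `r`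
eigenvalues of order `1 / ρ`; working with the product, rather than with each of them separately,
covers this case as well. Each `λ ^ N` dominates the product of the absolute values of the `2 N`
real coordinates it is built from, and `|x| ^ (-t)` has a finite Gaussian integral for `t < 1`,
so Markov's inequality bounds the probability by `K ρ ^ (-r N t)` for every `t < 1`
(`prob_prod_le`, `tailProb_le`).

Lower bound. If `r > m`, it is enough that `r` eigenvalues are at most a small multiple of `1 / ρ`,
which confines `r N` complex coordinates to boxes of side of order `ρ ^ (-1/2)`
(`le_tailProb_of_lt`). Otherwise `r = ν + 1`, and the same confinement of all the taps makes every
eigenvalue small, so that the sum is close to `Ld > m` (`le_tailProb_full`).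
-/

open MeasureTheory ProbabilityTheory Filter

noncomputable section

/-- Law of a single standard circularly-symmetric complex Gaussian entry, represented as
its pair (re, im) of independent `N(0, 1/2)` real Gaussians. -/
def entryLaw : Measure (ℝ × ℝ) := (gaussianReal 0 (1 / 2)).prod (gaussianReal 0 (1 / 2))

instance : IsProbabilityMeasure entryLaw := by
  unfold entryLaw; infer_instance

/-- Law of a family of i.i.d. standard complex Gaussian entries indexed by `ι`. -/
def matrixLaw (ι : Type*) [Fintype ι] : Measure (ι → ℝ × ℝ) :=
  Measure.pi fun _ => entryLaw

/-- Turn a pair of reals into a complex number. -/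
def toC (p : ℝ × ℝ) : ℂ := ⟨p.1, p.2⟩

/-- `λ_q = ‖b_q‖²` where `b_q = ∑_{n=0}^{ν} h_n e^{−j2πn(q−1)/L_d} ∈ ℂ^N` and the SIMO
channel taps `h_0, …, h_ν ∈ ℂ^N` have i.i.d. standard complex Gaussian entries (drawn
from `ω`). Here `q : Fin L_d` is zero-indexed, corresponding to `q−1` in the paper. -/
def lam (N ν Ld : ℕ) (ω : Fin (ν + 1) × Fin N → ℝ × ℝ) (q : Fin Ld) : ℝ :=
  ∑ l : Fin N, Complex.normSq (∑ n : Fin (ν + 1),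
    toC (ω (n, l)) *
      Complex.exp (-(2 * (Real.pi : ℂ) * Complex.I * ((n : ℕ) : ℂ) * ((q : ℕ) : ℂ))
        / (Ld : ℂ)))

/-- `P(∑_{q=1}^{L_d} 1/(1+ρλ_q^{(L_d)}) > m)` for the SIMO cyclic-prefix system with
data block length `L_d`. -/
def tailProb (N ν Ld : ℕ) (m ρ : ℝ) : ℝ :=
  (matrixLaw (Fin (ν + 1) × Fin N)
    {ω | m < ∑ q : Fin Ld, 1 / (1 + ρ * lam N ν Ld ω q)}).toReal

/-! ### Gaussian density and linear changes of variables -/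

/-- The squared Euclidean norm of a family of complex entries, written through real coordinates. -/
def sqSum {ι : Type*} [Fintype ι] (ω : ι → ℝ × ℝ) : ℝ := ∑ i, ((ω i).1 ^ 2 + (ω i).2 ^ 2)

lemma continuous_sqSum {ι : Type*} [Fintype ι] :
    Continuous (sqSum : (ι → ℝ × ℝ) → ℝ) := by
  unfold sqSum; fun_prop

lemma sqSum_le {ι : Type*} [Fintype ι] (ω : ι → ℝ × ℝ) :
    sqSum ω ≤ 2 * Fintype.card ι * ‖ω‖ ^ 2 := by
  have h : ∀ i ∈ Finset.univ, (ω i).1 ^ 2 + (ω i).2 ^ 2 ≤ 2 * ‖ω‖ ^ 2 := by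
    intro i _
    have h0 := norm_le_pi_norm ω i
    have h1 : |(ω i).1| ≤ ‖ω‖ := (norm_fst_le (ω i)).trans h0
    have h2 : |(ω i).2| ≤ ‖ω‖ := (norm_snd_le (ω i)).trans h0
    have h3 := pow_le_pow_left₀ (abs_nonneg _) h1 2
    have h4 := pow_le_pow_left₀ (abs_nonneg _) h2 2
    rw [sq_abs] at h3 h4
    linarith
  calc sqSum ω ≤ ∑ _i : ι, 2 * ‖ω‖ ^ 2 := Finset.sum_le_sum h
    _ = _ := by simp; ring

lemma norm_sq_le_sqSum {ι : Type*} [Fintype ι] (ω : ι → ℝ × ℝ) : ‖ω‖ ^ 2 ≤ sqSum ω := by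
  have hnn : 0 ≤ sqSum ω := Finset.sum_nonneg fun i _ => by positivity
  rw [← Real.le_sqrt (norm_nonneg _) hnn, pi_norm_le_iff_of_nonneg (Real.sqrt_nonneg _)]
  intro i
  have hi : (ω i).1 ^ 2 + (ω i).2 ^ 2 ≤ sqSum ω :=
    Finset.single_le_sum (f := fun i => (ω i).1 ^ 2 + (ω i).2 ^ 2)
      (fun i _ => by positivity) (Finset.mem_univ i)
  refine max_le ?_ ?_ <;> refine Real.abs_le_sqrt ?_
  · nlinarith [sq_nonneg (ω i).2]
  · nlinarith [sq_nonneg (ω i).1]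

lemma entryLaw_eq : entryLaw =
    volume.withDensity fun z : ℝ × ℝ =>
      ENNReal.ofReal (Real.pi⁻¹ * Real.exp (-(z.1 ^ 2 + z.2 ^ 2))) := by
  have hv : (1 / 2 : NNReal) ≠ 0 := by norm_num
  unfold entryLaw
  rw [gaussianReal_of_var_ne_zero _ hv, prod_withDensity (by fun_prop) (by fun_prop)]
  congr 1
  funext z
  rw [gaussianPDF, gaussianPDF, ← ENNReal.ofReal_mul (gaussianPDFReal_nonneg _ _ _)]
  congr 1
  simp only [gaussianPDFReal]
  have h2 : (2 * Real.pi * ((1 / 2 : NNReal) : ℝ)) = Real.pi := by push_cast; ring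
  rw [h2, mul_mul_mul_comm, ← mul_inv, Real.mul_self_sqrt Real.pi_pos.le, ← Real.exp_add]
  congr 2
  push_cast
  ring

lemma integrable_entry : Integrable
    (fun z : ℝ × ℝ => Real.pi⁻¹ * Real.exp (-(z.1 ^ 2 + z.2 ^ 2))) := by
  have h := integrable_exp_neg_mul_sq (b := 1) one_pos
  have h2 := (h.mul_prod h).const_mul Real.pi⁻¹
  refine h2.congr (Eventually.of_forall fun z => ?_)
  simp only
  rw [← Real.exp_add]
  congr 2
  ring

instance {ι : Type*} [Fintype ι] : IsProbabilityMeasure (matrixLaw ι) := by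
  unfold matrixLaw; infer_instance

/-- The law of the taps has density `π ^ (-card ι) * exp (-sqSum ω)` with respect to Lebesgue
measure. -/
lemma matrixLaw_eq (ι : Type*) [Fintype ι] : matrixLaw ι =
    volume.withDensity fun ω : ι → ℝ × ℝ =>
      ENNReal.ofReal (Real.pi⁻¹ ^ Fintype.card ι * Real.exp (-sqSum ω)) := by
  unfold matrixLaw
  refine Measure.pi_eq fun s hs => ?_
  rw [withDensity_apply _ (MeasurableSet.univ_pi hs), ← lintegral_indicator (MeasurableSet.univ_pi hs)]
  set f : ι → ℝ × ℝ → ℝ := fun i => (s i).indicator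
    (fun z : ℝ × ℝ => Real.pi⁻¹ * Real.exp (-(z.1 ^ 2 + z.2 ^ 2))) with hf
  have hfi : ∀ i, Integrable (f i) := fun i => integrable_entry.indicator (hs i)
  have hf0 : ∀ i z, 0 ≤ f i z := fun i z =>
    Set.indicator_nonneg (fun z _ => by positivity) z
  have hpt : ∀ ω : ι → ℝ × ℝ, (Set.univ.pi s).indicator (fun ω : ι → ℝ × ℝ =>
      ENNReal.ofReal (Real.pi⁻¹ ^ Fintype.card ι * Real.exp (-sqSum ω))) ω
      = ENNReal.ofReal (∏ i, f i (ω i)) := by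
    intro ω
    by_cases h : ω ∈ Set.univ.pi s
    · rw [Set.indicator_of_mem h]
      congr 1
      have : ∀ i, f i (ω i) = Real.pi⁻¹ * Real.exp (-((ω i).1 ^ 2 + (ω i).2 ^ 2)) := fun i =>
        Set.indicator_of_mem (h i (Set.mem_univ i)) _
      simp_rw [this, Finset.prod_mul_distrib, ← Real.exp_sum, sqSum,
        Finset.sum_neg_distrib, Finset.prod_const, Finset.card_univ]
    · rw [Set.indicator_of_notMem h]
      simp only [Set.mem_univ_pi, not_forall] at h
      obtain ⟨i, hi⟩ := h
      rw [Finset.prod_eq_zero (Finset.mem_univ i) (Set.indicator_of_notMem hi _)]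
      simp
  have hint : Integrable (fun ω : ι → ℝ × ℝ => ∏ i, f i (ω i)) := Integrable.fintype_prod hfi
  simp_rw [hpt]
  rw [← ofReal_integral_eq_lintegral_ofReal hint
    (Eventually.of_forall fun ω => Finset.prod_nonneg fun i _ => hf0 i _),
    integral_fintype_prod_volume_eq_prod, ENNReal.ofReal_prod_of_nonneg
      (fun i _ => integral_nonneg (hf0 i))]
  refine Finset.prod_congr rfl fun i _ => ?_
  rw [ofReal_integral_eq_lintegral_ofReal (hfi i) (Eventually.of_forall (hf0 i)), entryLaw_eq,
    withDensity_apply _ (hs i), ← lintegral_indicator (hs i)]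
  refine lintegral_congr fun z => ?_
  by_cases h : z ∈ s i <;> simp [hf, h]

lemma lintegral_comp_linearEquiv {ι : Type*} [Fintype ι]
    (Φ : (ι → ℝ × ℝ) ≃ₗ[ℝ] (ι → ℝ × ℝ)) (F : (ι → ℝ × ℝ) → ENNReal) (hF : Measurable F) :
    ∫⁻ ω, F (Φ ω) = ENNReal.ofReal |(LinearMap.det (Φ : (ι → ℝ × ℝ) →ₗ[ℝ] (ι → ℝ × ℝ)))⁻¹|
      * ∫⁻ y, F y := by
  have hdet : LinearMap.det (Φ : (ι → ℝ × ℝ) →ₗ[ℝ] (ι → ℝ × ℝ)) ≠ 0 :=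
    (LinearEquiv.isUnit_det' Φ).ne_zero
  have hm : Measurable (Φ : (ι → ℝ × ℝ) →ₗ[ℝ] (ι → ℝ × ℝ)) :=
    (LinearMap.continuous_of_finiteDimensional _).measurable
  have h := Measure.map_linearMap_addHaar_eq_smul_addHaar (volume : Measure (ι → ℝ × ℝ)) hdet
  have h2 := lintegral_map (μ := volume) hF hm
  rw [h, lintegral_smul_measure] at h2
  exact h2.symm

/-- The law of an invertible linear image of the Gaussian family has a density bounded above by
a multiple of a centred isotropic Gaussian weight. -/
lemma matrixLaw_preimage_le {ι : Type*} [Fintype ι] (Φ : (ι → ℝ × ℝ) ≃ₗ[ℝ] (ι → ℝ × ℝ)) :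
    ∃ a : ℝ, 0 < a ∧ ∃ K : ENNReal, K ≠ ⊤ ∧ ∀ A : Set (ι → ℝ × ℝ), MeasurableSet A →
      matrixLaw ι (Φ ⁻¹' A) ≤ K * ∫⁻ y in A, ENNReal.ofReal (Real.exp (-(a * sqSum y))) := by
  obtain ⟨M, hM0, hM⟩ := (LinearMap.toContinuousLinearMap
    (Φ : (ι → ℝ × ℝ) →ₗ[ℝ] (ι → ℝ × ℝ))).bound
  set C : ℝ := 2 * Fintype.card ι * M ^ 2 + 1 with hC
  have hC0 : 0 < C := by positivity
  have hQ : ∀ ω, C⁻¹ * sqSum (Φ ω) ≤ sqSum ω := by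
    intro ω
    rw [inv_mul_le_iff₀ hC0]
    have h1 := sqSum_le (Φ ω)
    have h2 : ‖Φ ω‖ ≤ M * ‖ω‖ := hM ω
    have h3 := pow_le_pow_left₀ (norm_nonneg _) h2 2
    have h4 := norm_sq_le_sqSum ω
    have h5 : sqSum (Φ ω) ≤ 2 * Fintype.card ι * M ^ 2 * ‖ω‖ ^ 2 := by
      refine h1.trans ?_
      rw [mul_assoc _ (M ^ 2), ← mul_pow]
      gcongr
    have h6 : 2 * Fintype.card ι * M ^ 2 * ‖ω‖ ^ 2 ≤ C * ‖ω‖ ^ 2 := by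
      gcongr; linarith
    exact h5.trans (h6.trans (by gcongr))
  refine ⟨C⁻¹, inv_pos.2 hC0, ENNReal.ofReal (Real.pi⁻¹ ^ Fintype.card ι) *
    ENNReal.ofReal |(LinearMap.det (Φ : (ι → ℝ × ℝ) →ₗ[ℝ] (ι → ℝ × ℝ)))⁻¹|,
    ENNReal.mul_ne_top ENNReal.ofReal_ne_top ENNReal.ofReal_ne_top, fun A hA => ?_⟩
  have hm : Measurable Φ :=
    (LinearMap.continuous_of_finiteDimensional (Φ : (ι → ℝ × ℝ) →ₗ[ℝ] (ι → ℝ × ℝ))).measurable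
  have hw : Measurable fun y : ι → ℝ × ℝ => ENNReal.ofReal (Real.exp (-(C⁻¹ * sqSum y))) := by
    have := continuous_sqSum (ι := ι)
    fun_prop
  rw [matrixLaw_eq, withDensity_apply _ (hm hA), ← lintegral_indicator (hm hA), mul_assoc,
    ← lintegral_indicator hA, ← lintegral_comp_linearEquiv Φ _ (hw.indicator hA),
    ← lintegral_const_mul' _ _ ENNReal.ofReal_ne_top]
  refine lintegral_mono fun ω => ?_
  by_cases h : Φ ω ∈ A
  · have h' : ω ∈ Φ ⁻¹' A := h
    simp only [Set.indicator_of_mem h, Set.indicator_of_mem h']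
    rw [ENNReal.ofReal_mul (by positivity)]
    gcongr
    exact hQ ω
  · have h' : ω ∉ Φ ⁻¹' A := h
    simp [Set.indicator_of_notMem h']

/-- On bounded sets the law of an invertible linear image of the Gaussian family dominates a
multiple of Lebesgue measure. -/
lemma le_matrixLaw_preimage {ι : Type*} [Fintype ι] (Φ : (ι → ℝ × ℝ) ≃ₗ[ℝ] (ι → ℝ × ℝ)) :
    ∃ c : ℝ, 0 < c ∧ ∀ A : Set (ι → ℝ × ℝ), MeasurableSet A → A ⊆ Metric.closedBall 0 1 →
      ENNReal.ofReal c * volume A ≤ matrixLaw ι (Φ ⁻¹' A) := by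
  obtain ⟨M, hM0, hM⟩ := (LinearMap.toContinuousLinearMap
    (Φ.symm : (ι → ℝ × ℝ) →ₗ[ℝ] (ι → ℝ × ℝ))).bound
  set C : ℝ := 2 * Fintype.card ι * M ^ 2 with hC
  have hdet : LinearMap.det (Φ : (ι → ℝ × ℝ) →ₗ[ℝ] (ι → ℝ × ℝ)) ≠ 0 :=
    (LinearEquiv.isUnit_det' Φ).ne_zero
  refine ⟨Real.pi⁻¹ ^ Fintype.card ι * Real.exp (-C) *
    |(LinearMap.det (Φ : (ι → ℝ × ℝ) →ₗ[ℝ] (ι → ℝ × ℝ)))⁻¹|,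
    by positivity, fun A hA hA1 => ?_⟩
  have hm : Measurable Φ :=
    (LinearMap.continuous_of_finiteDimensional (Φ : (ι → ℝ × ℝ) →ₗ[ℝ] (ι → ℝ × ℝ))).measurable
  have hvol := Measure.addHaar_preimage_linearMap (volume : Measure (ι → ℝ × ℝ)) hdet A
  have hvol' : volume (Φ ⁻¹' A) = _ := hvol
  rw [ENNReal.ofReal_mul (by positivity), mul_assoc, ← hvol', matrixLaw_eq,
    withDensity_apply _ (hm hA), ← setLIntegral_const]
  refine setLIntegral_mono' (hm hA) fun ω hω => ?_
  gcongr
  have h1 : ‖Φ ω‖ ≤ 1 := by simpa using hA1 hω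
  have h2 : ‖ω‖ ≤ M := by
    have : ‖Φ.symm (Φ ω)‖ ≤ M * ‖Φ ω‖ := hM (Φ ω)
    rw [Φ.symm_apply_apply] at this
    nlinarith
  refine (sqSum_le ω).trans ?_
  rw [hC]
  gcongr

/-! ### Small-ball estimates for the coordinates of a linear image -/

lemma integrable_weight {t a : ℝ} (ht : t < 1) (ha : 0 < a) :
    Integrable (fun x : ℝ => |x| ^ (-t) * Real.exp (-a * x ^ 2)) := by
  have h := ((integrableOn_rpow_mul_exp_neg_mul_sq ha (s := -t) (by linarith)).integrable_indicator
    measurableSet_Ioi)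
  refine (h.add h.comp_neg).congr ?_
  have h0 : ∀ᵐ x : ℝ, x ≠ 0 := by simp [ae_iff]
  filter_upwards [h0] with x hx
  rcases lt_or_gt_of_ne hx with hx | hx
  · simp [Set.indicator, hx, hx.le, abs_of_neg hx]
  · simp [Set.indicator, hx, hx.le, abs_of_pos hx]

lemma ae_coord_ne_zero {ι : Type*} [Fintype ι] :
    ∀ᵐ y : ι → ℝ × ℝ, ∀ i, (y i).1 ≠ 0 ∧ (y i).2 ≠ 0 := by
  rw [ae_all_iff]
  intro i
  have h0 : ∀ᵐ x : ℝ, x ≠ 0 := by simp [ae_iff]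
  have h1 : ∀ᵐ z : ℝ × ℝ, z.1 ≠ 0 ∧ z.2 ≠ 0 :=
    (Measure.quasiMeasurePreserving_fst.ae h0).and (Measure.quasiMeasurePreserving_snd.ae h0)
  exact (Measure.tendsto_eval_ae_ae (μ := fun _ : ι => (volume : Measure (ℝ × ℝ)))
    (i := i)).eventually h1

/-- A Chernoff-type bound: since `|x| ^ (-t)` is integrable at the origin for `t < 1`, the product
of the coordinates indexed by `S` has a negative moment of order `t`. -/
lemma prob_prod_le {ι : Type*} [Fintype ι] (Φ : (ι → ℝ × ℝ) ≃ₗ[ℝ] (ι → ℝ × ℝ)) (S : Finset ι)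
    {t : ℝ} (ht0 : 0 < t) (ht : t < 1) :
    ∃ K : ℝ, 0 ≤ K ∧ ∀ δ : ℝ, 0 < δ →
      matrixLaw ι (Φ ⁻¹' {y | ∏ i ∈ S, |(y i).1| * |(y i).2| ≤ δ}) ≤ ENNReal.ofReal (K * δ ^ t) := by
  classical
  obtain ⟨a, ha, K, hK, hbd⟩ := matrixLaw_preimage_le Φ
  -- the integrand factors over the coordinates, with the singular weight only on `S`
  set τ : ι → ℝ := fun i => if i ∈ S then t else 0 with hτ
  have hτ1 : ∀ i, τ i < 1 := fun i => by simp only [hτ]; split_ifs <;> linarith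
  set g : ι → ℝ × ℝ → ℝ := fun i z =>
    (|z.1| ^ (-τ i) * Real.exp (-a * z.1 ^ 2)) * (|z.2| ^ (-τ i) * Real.exp (-a * z.2 ^ 2)) with hg
  have hgi : ∀ i, Integrable (g i) := fun i =>
    (integrable_weight (hτ1 i) ha).mul_prod (integrable_weight (hτ1 i) ha)
  have hint : Integrable (fun y : ι → ℝ × ℝ => ∏ i, g i (y i)) := Integrable.fintype_prod hgi
  have hg0 : ∀ y : ι → ℝ × ℝ, 0 ≤ ∏ i, g i (y i) := fun y =>
    Finset.prod_nonneg fun i _ => by simp only [hg]; positivity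
  refine ⟨K.toReal * ∫ y : ι → ℝ × ℝ, ∏ i, g i (y i),
    mul_nonneg ENNReal.toReal_nonneg (integral_nonneg hg0), fun δ hδ => ?_⟩
  have hA : MeasurableSet {y : ι → ℝ × ℝ | ∏ i ∈ S, |(y i).1| * |(y i).2| ≤ δ} := by
    refine (isClosed_le (f := fun y : ι → ℝ × ℝ => ∏ i ∈ S, |(y i).1| * |(y i).2|) ?_
      continuous_const).measurableSet
    fun_prop
  refine (hbd _ hA).trans ?_
  rw [mul_assoc, ENNReal.ofReal_mul ENNReal.toReal_nonneg, ENNReal.ofReal_toReal hK,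
    ← integral_mul_const, ofReal_integral_eq_lintegral_ofReal (hint.mul_const _)
      (Eventually.of_forall fun y => mul_nonneg (hg0 y) (by positivity)), ← lintegral_indicator hA]
  gcongr 1
  refine lintegral_mono_ae ?_
  filter_upwards [ae_coord_ne_zero (ι := ι)] with y hy
  by_cases h : y ∈ {y : ι → ℝ × ℝ | ∏ i ∈ S, |(y i).1| * |(y i).2| ≤ δ}
  swap
  · rw [Set.indicator_of_notMem h]; exact zero_le
  rw [Set.indicator_of_mem h]
  refine ENNReal.ofReal_le_ofReal ?_
  set p := ∏ i ∈ S, |(y i).1| * |(y i).2| with hp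
  have hp0 : 0 < p := Finset.prod_pos fun i _ =>
    mul_pos (abs_pos.2 (hy i).1) (abs_pos.2 (hy i).2)
  have hpδ : p ≤ δ := h
  have hprod : ∏ i, g i (y i) = p ^ (-t) * Real.exp (-(a * sqSum y)) := by
    have e1 : ∀ i, g i (y i) = (if i ∈ S then (|(y i).1| * |(y i).2|) ^ (-t) else 1) *
        Real.exp (-a * ((y i).1 ^ 2 + (y i).2 ^ 2)) := by
      intro i
      simp only [hg, hτ]
      rw [mul_mul_mul_comm, ← Real.exp_add, ← mul_add]
      split_ifs
      · rw [Real.mul_rpow (abs_nonneg _) (abs_nonneg _)]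
      · simp
    simp_rw [e1]
    rw [Finset.prod_mul_distrib, ← Real.exp_sum, ← Finset.mul_sum, hp,
      ← Real.finsetProd_rpow _ _ (fun i _ => by positivity), Finset.prod_ite_mem, Finset.univ_inter]
    simp [sqSum]
  rw [hprod]
  have h1 : 1 ≤ p ^ (-t) * δ ^ t := by
    rw [Real.rpow_neg hp0.le, ← div_eq_inv_mul, le_div_iff₀ (Real.rpow_pos_of_pos hp0 _), one_mul]
    exact Real.rpow_le_rpow hp0.le hpδ ht0.le
  nlinarith [Real.exp_pos (-(a * sqSum y))]

/-- The set of families whose coordinates indexed by `S` have real and imaginary parts at most `η`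
in absolute value, all other real and imaginary parts being at most `1`. -/
def boxSet {ι : Type*} (S : Set ι) (η : ℝ) : Set (ι → ℝ × ℝ) :=
  {y | ∀ i, (|(y i).1| ≤ 1 ∧ |(y i).2| ≤ 1) ∧ (i ∈ S → |(y i).1| ≤ η ∧ |(y i).2| ≤ η)}

lemma le_prob_boxSet {ι : Type*} [Fintype ι] (Φ : (ι → ℝ × ℝ) ≃ₗ[ℝ] (ι → ℝ × ℝ)) (S : Finset ι) :
    ∃ c : ℝ, 0 < c ∧ ∀ η : ℝ, 0 < η → η ≤ 1 →
      ENNReal.ofReal (c * η ^ (2 * S.card)) ≤ matrixLaw ι (Φ ⁻¹' boxSet (S : Set ι) η) := by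
  classical
  obtain ⟨c, hc, h⟩ := le_matrixLaw_preimage Φ
  refine ⟨c, hc, fun η hη hη1 => ?_⟩
  set s : ι → ℝ := fun i => if i ∈ S then η else 1 with hs
  have hs0 : ∀ i, 0 ≤ s i := fun i => by simp only [hs]; split_ifs <;> linarith
  have hbox : boxSet (S : Set ι) η =
      Set.univ.pi fun i => Set.Icc (-s i) (s i) ×ˢ Set.Icc (-s i) (s i) := by
    ext y
    simp only [boxSet, Set.mem_ofPred_eq, Set.mem_univ_pi, Set.mem_prod, Set.mem_Icc, ← abs_le]
    refine forall_congr' fun i => ?_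
    by_cases hi : i ∈ S
    · simp only [Finset.mem_coe, hi, hs, if_true, forall_const]
      exact ⟨fun h => h.2, fun h => ⟨⟨h.1.trans hη1, h.2.trans hη1⟩, h⟩⟩
    · simp [hi, hs]
  have hm : MeasurableSet (boxSet (S : Set ι) η) := by
    rw [hbox]
    exact MeasurableSet.univ_pi fun i => measurableSet_Icc.prod measurableSet_Icc
  have hball : boxSet (S : Set ι) η ⊆ Metric.closedBall 0 1 := by
    intro y hy
    rw [mem_closedBall_zero_iff, pi_norm_le_iff_of_nonneg zero_le_one]
    exact fun i => max_le (hy i).1.1 (hy i).1.2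
  refine le_trans ?_ (h _ hm hball)
  rw [ENNReal.ofReal_mul hc.le]
  gcongr
  rw [hbox, volume_pi_pi]
  have hv : ∀ i, volume (Set.Icc (-s i) (s i) ×ˢ Set.Icc (-s i) (s i))
      = ENNReal.ofReal ((2 * s i) ^ 2) := by
    intro i
    rw [Measure.volume_eq_prod, Measure.prod_prod, Real.volume_Icc,
      ← ENNReal.ofReal_mul (by linarith [hs0 i])]
    congr 1
    ring
  simp_rw [hv]
  rw [← ENNReal.ofReal_prod_of_nonneg (fun i _ => by positivity)]
  refine ENNReal.ofReal_le_ofReal ?_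
  calc η ^ (2 * S.card) = ∏ i, s i ^ 2 := by
        simp only [hs]
        rw [Finset.prod_pow, Finset.prod_ite_mem, Finset.univ_inter, Finset.prod_const, ← pow_mul,
          mul_comm]
    _ ≤ _ := by
        refine Finset.prod_le_prod (fun i _ => by positivity) fun i _ => ?_
        have := hs0 i
        gcongr
        linarith

/-! ### Elementary real analysis -/

/-- If nonnegative increasing numbers satisfy `∑ 1 / (1 + g i) > m ≥ k`, then the first `k + 1` of
them have bounded product. The sum may exceed an integer `k` with only `k` terms close to `1`,
but then `g (k - 1)` is small enough for `g (k - 1) * g k` to stay bounded. -/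
lemma prod_le_of_sum_lt (L k : ℕ) (hk : k < L) (m : ℝ) (hm : 0 < m) : ∃ C : ℝ, 0 < C ∧
    ∀ g : ℕ → ℝ, (∀ i, 0 ≤ g i) → (∀ i j, i ≤ j → j < L → g i ≤ g j) →
      (k : ℝ) ≤ m → m < ∑ i ∈ Finset.range L, 1 / (1 + g i) →
      ∏ i ∈ Finset.range (k + 1), g i ≤ C := by
  have hL : (1 : ℝ) ≤ L := by exact_mod_cast (by omega : 1 ≤ L)
  -- every term from index `k` on is at most the term at `k`, and there are at most `L` of them
  have key : ∀ g : ℕ → ℝ, (∀ i, 0 ≤ g i) → (∀ i j, i ≤ j → j < L → g i ≤ g j) →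
      ∑ i ∈ Finset.range L, 1 / (1 + g i) ≤
        ∑ i ∈ Finset.range k, 1 / (1 + g i) + L / (1 + g k) := by
    intro g h0 hmono
    rw [← Finset.sum_range_add_sum_Ico _ hk.le]
    have h1 : ∑ i ∈ Finset.Ico k L, 1 / (1 + g i) ≤ ∑ _i ∈ Finset.Ico k L, 1 / (1 + g k) := by
      refine Finset.sum_le_sum fun i hi => ?_
      rw [Finset.mem_Ico] at hi
      have := hmono k i hi.1 hi.2
      have := h0 k
      gcongr
    have h2 : ∑ _i ∈ Finset.Ico k L, 1 / (1 + g k) ≤ L / (1 + g k) := by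
      rw [Finset.sum_const, Nat.card_Ico, nsmul_eq_mul, mul_one_div]
      have := h0 k
      gcongr
      exact Nat.sub_le _ _
    linarith
  have hle1 : ∀ g : ℕ → ℝ, (∀ i, 0 ≤ g i) → ∀ i, 1 / (1 + g i) ≤ 1 := by
    intro g h0 i
    rw [div_le_one (by linarith [h0 i])]
    linarith [h0 i]
  rcases k with _ | k
  · refine ⟨L / m, by positivity, fun g h0 hmono _ hsum => ?_⟩
    have h := key g h0 hmono
    have h3 := h0 0
    simp only [Finset.range_zero, Finset.sum_empty, zero_add] at h
    have h2 : m < L / (1 + g 0) := hsum.trans_le h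
    rw [lt_div_iff₀ (by linarith)] at h2
    simp only [zero_add, Finset.prod_range_one]
    rw [le_div_iff₀ hm]
    nlinarith
  · refine ⟨L ^ k * (L * (1 + L)), by positivity, fun g h0 hmono hkm hsum => ?_⟩
    have h := key g h0 hmono
    rw [Finset.sum_range_succ] at h
    have hs : ∑ i ∈ Finset.range k, 1 / (1 + g i) ≤ k := by
      calc _ ≤ ∑ _i ∈ Finset.range k, (1 : ℝ) := Finset.sum_le_sum fun i _ => hle1 g h0 i
        _ = k := by simp
    push_cast at hkm
    set x := g k with hx
    set y := g (k + 1) with hy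
    have hx0 : 0 ≤ x := h0 _
    have hy0 : 0 ≤ y := h0 _
    have hxy : x ≤ y := hmono _ _ (Nat.le_succ k) hk
    have h4 : 1 < 1 / (1 + x) + L / (1 + y) := by linarith
    have h5 : x * (1 + y) ≤ L * (1 + x) := by
      have hx1 : 0 < 1 + x := by linarith
      have hy1 : 0 < 1 + y := by linarith
      rw [div_add_div _ _ hx1.ne' hy1.ne', lt_div_iff₀ (by positivity)] at h4
      nlinarith
    have hxL : x ≤ L := by
      have : x * (1 + x) ≤ L * (1 + x) := by nlinarith
      exact le_of_mul_le_mul_right this (by linarith)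
    have hxyL : x * y ≤ L * (1 + L) := by nlinarith
    rw [Finset.prod_range_succ, Finset.prod_range_succ, mul_assoc]
    refine mul_le_mul ?_ hxyL (by positivity) (by positivity)
    calc ∏ i ∈ Finset.range k, g i ≤ ∏ _i ∈ Finset.range k, (L : ℝ) :=
          Finset.prod_le_prod (fun i _ => h0 i) fun i hi =>
            (hmono i k (Finset.mem_range.1 hi).le (by omega)).trans hxL
      _ = _ := by simp

lemma exists_eps {m r C : ℝ} (hmr : m < r) :
    ∃ ε : ℝ, 0 < ε ∧ ε ≤ 1 ∧ m < r / (1 + C * ε ^ 2) := by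
  have hc : ContinuousAt (fun ε : ℝ => r / (1 + C * ε ^ 2)) 0 :=
    ContinuousAt.div (by fun_prop) (by fun_prop) (by simp)
  have h1 : ∀ᶠ ε in nhds (0 : ℝ), m < r / (1 + C * ε ^ 2) :=
    hc.eventually (lt_mem_nhds (by simpa using hmr))
  obtain ⟨δ, hδ, h2⟩ := Metric.eventually_nhds_iff.1 h1
  refine ⟨min 1 (δ / 2), by positivity, min_le_left _ _, h2 ?_⟩
  rw [Real.dist_eq, sub_zero, abs_of_pos (by positivity)]
  exact (min_le_right _ _).trans_lt (by linarith)

/-- A power-law lower bound of exponent `-D` together with upper bounds of exponents `-D t` for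
every `t < 1` (with constants depending on `t`) determines the exponential order. -/
lemma tendsto_log_div_log {f : ℝ → ℝ} {D : ℝ} {c : ℝ} (hc : 0 < c)
    (hlow : ∀ ρ, 1 ≤ ρ → c * ρ ^ (-D) ≤ f ρ)
    (hup : ∀ t, 0 < t → t < 1 → ∃ K : ℝ, ∀ ρ, 1 ≤ ρ → f ρ ≤ K * ρ ^ (-(D * t))) :
    Tendsto (fun ρ => Real.log (f ρ) / Real.log ρ) atTop (nhds (-D)) := by
  have hlim : ∀ a b : ℝ, Tendsto (fun ρ => a / Real.log ρ + b) atTop (nhds b) := by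
    intro a b
    simpa using (Tendsto.const_div_atTop Real.tendsto_log_atTop a).add_const b
  have hexp : ∀ a b ρ : ℝ, 0 < a → 1 < ρ →
      Real.log (a * ρ ^ b) / Real.log ρ = Real.log a / Real.log ρ + b := by
    intro a b ρ ha hρ
    have h0 : 0 < ρ := by linarith
    have := Real.log_pos hρ
    rw [Real.log_mul ha.ne' (Real.rpow_pos_of_pos h0 _).ne', Real.log_rpow h0]
    field_simp
  rw [tendsto_order]
  constructor
  · intro a ha
    filter_upwards [(hlim (Real.log c) (-D)).eventually (lt_mem_nhds ha), eventually_gt_atTop 1]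
      with ρ h1 hρ
    have h0 : 0 < ρ := by linarith
    refine h1.trans_le ?_
    rw [← hexp c (-D) ρ hc hρ]
    have := Real.log_pos hρ
    gcongr
    exact hlow ρ hρ.le
  · intro b hb
    obtain ⟨t, ht0, ht1, htb⟩ : ∃ t : ℝ, 0 < t ∧ t < 1 ∧ -(D * t) < b := by
      have hcont : ContinuousAt (fun t : ℝ => -(D * t)) 1 := by fun_prop
      have h1 : ∀ᶠ t in nhds (1 : ℝ), -(D * t) < b :=
        hcont.eventually (gt_mem_nhds (by simpa using hb))
      have h2 : ∀ᶠ t in nhdsWithin (1 : ℝ) (Set.Iio 1), -(D * t) < b := h1.filter_mono nhdsWithin_le_nhds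
      have h3 : ∀ᶠ t in nhdsWithin (1 : ℝ) (Set.Iio 1), t ∈ Set.Ioo (0 : ℝ) 1 :=
        Ioo_mem_nhdsLT one_pos
      obtain ⟨t, h4, h5⟩ := (h2.and h3).exists
      exact ⟨t, h5.1, h5.2, h4⟩
    obtain ⟨K, hK⟩ := hup t ht0 ht1
    have hK0 : 0 < K := by
      have h1 := (hlow 1 le_rfl).trans (hK 1 le_rfl)
      simp only [Real.one_rpow, mul_one] at h1
      linarith
    filter_upwards [(hlim (Real.log K) (-(D * t))).eventually (gt_mem_nhds htb),
      eventually_gt_atTop 1] with ρ h1 hρ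
    have h0 : 0 < ρ := by linarith
    refine lt_of_le_of_lt ?_ h1
    rw [← hexp K _ ρ hK0 hρ]
    have := Real.log_pos hρ
    have hf : 0 < f ρ := lt_of_lt_of_le (by positivity) (hlow ρ hρ.le)
    gcongr
    exact hK ρ hρ.le

/-! ### Channel evaluations at distinct roots of unity -/

/-- The value at frequency `q` of the channel transfer function seen by antenna `l`. -/
def chanVal (N ν Ld : ℕ) (ω : Fin (ν + 1) × Fin N → ℝ × ℝ) (q : Fin Ld) (l : Fin N) : ℂ :=
  ∑ n : Fin (ν + 1), toC (ω (n, l)) *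
    Complex.exp (-(2 * (Real.pi : ℂ) * Complex.I * ((n : ℕ) : ℂ) * ((q : ℕ) : ℂ)) / (Ld : ℂ))

lemma lam_eq (N ν Ld : ℕ) (ω : Fin (ν + 1) × Fin N → ℝ × ℝ) (q : Fin Ld) :
    lam N ν Ld ω q = ∑ l : Fin N, ((chanVal N ν Ld ω q l).re ^ 2 + (chanVal N ν Ld ω q l).im ^ 2) := by
  unfold lam chanVal
  simp_rw [Complex.normSq_apply, sq]

lemma lam_nonneg (N ν Ld : ℕ) (ω : Fin (ν + 1) × Fin N → ℝ × ℝ) (q : Fin Ld) :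
    0 ≤ lam N ν Ld ω q := Finset.sum_nonneg fun _ _ => Complex.normSq_nonneg _

lemma toC_add (p q : ℝ × ℝ) : toC (p + q) = toC p + toC q := by
  apply Complex.ext <;> simp [toC]

lemma toC_smul (c : ℝ) (p : ℝ × ℝ) : toC (c • p) = c * toC p := by
  apply Complex.ext <;> simp [toC]

lemma chanVal_add (N ν Ld : ℕ) (ω ω' : Fin (ν + 1) × Fin N → ℝ × ℝ) (q : Fin Ld) (l : Fin N) :
    chanVal N ν Ld (ω + ω') q l = chanVal N ν Ld ω q l + chanVal N ν Ld ω' q l := by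
  simp only [chanVal, Pi.add_apply, toC_add, add_mul, Finset.sum_add_distrib]

lemma chanVal_smul (N ν Ld : ℕ) (c : ℝ) (ω : Fin (ν + 1) × Fin N → ℝ × ℝ) (q : Fin Ld)
    (l : Fin N) : chanVal N ν Ld (c • ω) q l = c * chanVal N ν Ld ω q l := by
  simp only [chanVal, Pi.smul_apply, toC_smul, mul_assoc, Finset.mul_sum]

/-- Evaluation of the channel polynomials at the frequencies `σ 0, …, σ ν`, as a real-linear map
on the real coordinates of the taps. -/
def sampleMap (N ν Ld : ℕ) (σ : Fin (ν + 1) → Fin Ld) :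
    (Fin (ν + 1) × Fin N → ℝ × ℝ) →ₗ[ℝ] (Fin (ν + 1) × Fin N → ℝ × ℝ) where
  toFun ω := fun p =>
    ((chanVal N ν Ld ω (σ p.1) p.2).re, (chanVal N ν Ld ω (σ p.1) p.2).im)
  map_add' ω ω' := by
    funext p
    simp [chanVal_add]
  map_smul' c ω := by
    funext p
    simp [chanVal_smul]

lemma exp_node (Ld : ℕ) (n q : ℕ) :
    Complex.exp (-(2 * (Real.pi : ℂ) * Complex.I * (n : ℂ) * (q : ℂ)) / (Ld : ℂ)) =
      ((Complex.exp (2 * (Real.pi : ℂ) * Complex.I / (Ld : ℂ)) ^ q)⁻¹) ^ n := by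
  rw [← Complex.exp_nat_mul, ← Complex.exp_neg, ← Complex.exp_nat_mul]
  congr 1
  ring

/-- A polynomial of degree at most `ν` vanishing at `ν + 1` distinct roots of unity is zero. -/
lemma sampleMap_injective (N ν Ld : ℕ) (σ : Fin (ν + 1) → Fin Ld) (hσ : Function.Injective σ) :
    Function.Injective (sampleMap N ν Ld σ) := by
  rw [injective_iff_map_eq_zero]
  intro ω hω
  have hLd : Ld ≠ 0 := by
    rintro rfl
    exact (σ 0).elim0
  have hprim := Complex.isPrimitiveRoot_exp Ld hLd
  set ζ := Complex.exp (2 * (Real.pi : ℂ) * Complex.I / (Ld : ℂ)) with hζ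
  have hnode : Function.Injective fun j : Fin (ν + 1) => (ζ ^ ((σ j : Fin Ld) : ℕ))⁻¹ := by
    intro i j hij
    have := hprim.pow_inj (σ i).2 (σ j).2 (inv_injective hij)
    exact hσ (Fin.ext this)
  funext ⟨n, l⟩
  have hz := Matrix.eq_zero_of_forall_index_sum_mul_pow_eq_zero
    (v := fun n : Fin (ν + 1) => toC (ω (n, l))) hnode (fun j => by
      have h1 := congrFun hω (j, l)
      have h2 : chanVal N ν Ld ω (σ j) l = 0 :=
        Complex.ext (congrArg Prod.fst h1) (congrArg Prod.snd h1)
      simpa only [chanVal, exp_node] using h2)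
  have h3 : toC (ω (n, l)) = 0 := congrFun hz n
  exact Prod.ext (congrArg Complex.re h3) (congrArg Complex.im h3)

/-- Evaluation at `ν + 1` distinct frequencies as a linear automorphism. -/
def sampleEquiv (N ν Ld : ℕ) (σ : Fin (ν + 1) → Fin Ld) (hσ : Function.Injective σ) :
    (Fin (ν + 1) × Fin N → ℝ × ℝ) ≃ₗ[ℝ] (Fin (ν + 1) × Fin N → ℝ × ℝ) :=
  LinearEquiv.ofInjectiveEndo (sampleMap N ν Ld σ) (sampleMap_injective N ν Ld σ hσ)

lemma sampleEquiv_apply (N ν Ld : ℕ) (σ : Fin (ν + 1) → Fin Ld) (hσ : Function.Injective σ)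
    (ω : Fin (ν + 1) × Fin N → ℝ × ℝ) (p : Fin (ν + 1) × Fin N) :
    sampleEquiv N ν Ld σ hσ ω p =
      ((chanVal N ν Ld ω (σ p.1) p.2).re, (chanVal N ν Ld ω (σ p.1) p.2).im) := rfl

lemma lam_sample (N ν Ld : ℕ) (σ : Fin (ν + 1) → Fin Ld) (hσ : Function.Injective σ)
    (ω : Fin (ν + 1) × Fin N → ℝ × ℝ) (j : Fin (ν + 1)) :
    lam N ν Ld ω (σ j) = ∑ l : Fin N, ((sampleEquiv N ν Ld σ hσ ω (j, l)).1 ^ 2 +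
      (sampleEquiv N ν Ld σ hσ ω (j, l)).2 ^ 2) := by
  rw [lam_eq]
  rfl

/-- The coordinates attached to the first `r` of the `ν + 1` sampled frequencies. -/
def firstIdx (N ν r : ℕ) : Finset (Fin (ν + 1) × Fin N) :=
  (Finset.univ.filter fun j : Fin (ν + 1) => (j : ℕ) < r) ×ˢ Finset.univ

lemma card_filter_lt (ν r : ℕ) (hr : r ≤ ν + 1) :
    (Finset.univ.filter fun j : Fin (ν + 1) => (j : ℕ) < r).card = r := by
  rw [Fin.card_filter_val_lt]
  omega

lemma card_firstIdx (N ν r : ℕ) (hr : r ≤ ν + 1) : (firstIdx N ν r).card = r * N := by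
  rw [firstIdx, Finset.card_product, card_filter_lt ν r hr]
  simp

lemma prod_filter_lt (ν r : ℕ) (hr : r ≤ ν + 1) (g : ℕ → ℝ) :
    ∏ j ∈ Finset.univ.filter (fun j : Fin (ν + 1) => (j : ℕ) < r), g j =
      ∏ i ∈ Finset.range r, g i := by
  rw [Finset.prod_filter, Fin.prod_univ_eq_prod_range (fun i => if i < r then g i else 1),
    ← Finset.prod_filter]
  congr 1
  ext i
  simp only [Finset.mem_filter, Finset.mem_range]
  omega

/-- Each eigenvalue dominates each product `|Re| |Im|` of the `N` entries it is built from, hence its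
`N`-th power dominates the product of all of them. -/
lemma prod_coord_le (N ν Ld r : ℕ) (σ : Fin (ν + 1) → Fin Ld) (hσ : Function.Injective σ)
    (ω : Fin (ν + 1) × Fin N → ℝ × ℝ) :
    ∏ p ∈ firstIdx N ν r, |(sampleEquiv N ν Ld σ hσ ω p).1| * |(sampleEquiv N ν Ld σ hσ ω p).2| ≤
      (∏ j ∈ Finset.univ.filter (fun j : Fin (ν + 1) => (j : ℕ) < r), lam N ν Ld ω (σ j)) ^ N := by
  rw [firstIdx, Finset.prod_product, ← Finset.prod_pow]
  refine Finset.prod_le_prod (fun j _ => Finset.prod_nonneg fun l _ => by positivity) fun j _ => ?_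
  calc _ ≤ ∏ _l : Fin N, lam N ν Ld ω (σ j) := by
        refine Finset.prod_le_prod (fun l _ => by positivity) fun l _ => ?_
        rw [lam_sample N ν Ld σ hσ]
        refine le_trans ?_ (Finset.single_le_sum (f := fun l =>
          (sampleEquiv N ν Ld σ hσ ω (j, l)).1 ^ 2 + (sampleEquiv N ν Ld σ hσ ω (j, l)).2 ^ 2)
          (fun l _ => by positivity) (Finset.mem_univ l))
        generalize sampleEquiv N ν Ld σ hσ ω (j, l) = z
        rw [← sq_abs z.1, ← sq_abs z.2]
        nlinarith [sq_nonneg (|z.1| - |z.2|), sq_nonneg (|z.1|), sq_nonneg (|z.2|)]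
    _ = _ := by simp

/-! ### Upper bound -/

/-- Sorting the eigenvalues exhibits `k + 1` distinct frequencies with small eigenvalue product. -/
lemma exists_sample_of_sum_lt (N ν Ld k : ℕ) (h : ν + 1 ≤ Ld) (hk : k ≤ ν) (m : ℝ) (hm : 0 < m)
    (hkm : (k : ℝ) ≤ m) : ∃ C : ℝ, 0 < C ∧ ∀ ρ : ℝ, 1 ≤ ρ → ∀ ω,
      m < ∑ q : Fin Ld, 1 / (1 + ρ * lam N ν Ld ω q) →
      ∃ σ : Fin (ν + 1) → Fin Ld, Function.Injective σ ∧
        ∏ j ∈ Finset.univ.filter (fun j : Fin (ν + 1) => (j : ℕ) < k + 1), lam N ν Ld ω (σ j)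
          ≤ C / ρ ^ (k + 1) := by
  obtain ⟨C, hC, hbd⟩ := prod_le_of_sum_lt Ld k (by omega) m hm
  refine ⟨C, hC, fun ρ hρ ω hsum => ?_⟩
  have hρ0 : 0 < ρ := by linarith
  set e := Tuple.sort (lam N ν Ld ω) with he
  have hmono : Monotone (lam N ν Ld ω ∘ e) := Tuple.monotone_sort _
  set g : ℕ → ℝ := fun i => if hi : i < Ld then ρ * lam N ν Ld ω (e ⟨i, hi⟩) else 0 with hg
  have hgF : ∀ i : Fin Ld, g i = ρ * lam N ν Ld ω (e i) := fun i => by simp [hg]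
  have hb := hbd g ?_ ?_ hkm ?_
  · refine ⟨fun j => e (Fin.castLE h j), e.injective.comp (Fin.castLE_injective h), ?_⟩
    rw [le_div_iff₀ (by positivity)]
    rw [← prod_filter_lt ν (k + 1) (by omega)] at hb
    refine le_trans (le_of_eq ?_) hb
    have : ∀ j : Fin (ν + 1), g j = ρ * lam N ν Ld ω (e (Fin.castLE h j)) := fun j =>
      hgF (Fin.castLE h j)
    simp_rw [this]
    rw [Finset.prod_mul_distrib, Finset.prod_const, card_filter_lt ν (k + 1) (by omega), mul_comm]
  · intro i
    simp only [hg]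
    split_ifs
    · exact mul_nonneg hρ0.le (lam_nonneg ..)
    · exact le_rfl
  · intro i j hij hj
    have hi : i < Ld := by omega
    simp only [hg, hi, hj, dif_pos]
    exact mul_le_mul_of_nonneg_left (hmono (show (⟨i, hi⟩ : Fin Ld) ≤ ⟨j, hj⟩ from hij)) hρ0.le
  · rw [← Fin.sum_univ_eq_sum_range (fun i => 1 / (1 + g i))]
    simp_rw [hgF]
    rwa [Equiv.sum_comp e (fun q => 1 / (1 + ρ * lam N ν Ld ω q))]

/-- A union bound over the possible sampled frequencies, using `∏ λ ≤ C ρ ^ (-(k + 1))` on the event. -/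
lemma tailProb_le (N ν Ld k : ℕ) (h : ν + 1 ≤ Ld) (hk : k ≤ ν) (m : ℝ) (hm : 0 < m)
    (hkm : (k : ℝ) ≤ m) (t : ℝ) (ht0 : 0 < t) (ht1 : t < 1) :
    ∃ K : ℝ, ∀ ρ : ℝ, 1 ≤ ρ →
      tailProb N ν Ld m ρ ≤ K * ρ ^ (-((((k + 1) * N : ℕ) : ℝ) * t)) := by
  classical
  obtain ⟨C, hC, hsub⟩ := exists_sample_of_sum_lt N ν Ld k h hk m hm hkm
  set I := {σ : Fin (ν + 1) → Fin Ld // Function.Injective σ} with hI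
  have hK := fun σ : I => prob_prod_le (sampleEquiv N ν Ld σ.1 σ.2) (firstIdx N ν (k + 1)) ht0 ht1
  choose K hK0 hK using hK
  refine ⟨∑ σ : I, K σ * C ^ (N * t), fun ρ hρ => ?_⟩
  have hρ0 : 0 < ρ := by linarith
  set δ : ℝ := (C / ρ ^ (k + 1)) ^ N with hδ
  have hδ0 : 0 < δ := by positivity
  have hcover : {ω | m < ∑ q : Fin Ld, 1 / (1 + ρ * lam N ν Ld ω q)} ⊆
      ⋃ σ : I, sampleEquiv N ν Ld σ.1 σ.2 ⁻¹'
        {y | ∏ i ∈ firstIdx N ν (k + 1), |(y i).1| * |(y i).2| ≤ δ} := by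
    intro ω hω
    obtain ⟨σ, hσ, hle⟩ := hsub ρ hρ ω hω
    refine Set.mem_iUnion.2 ⟨⟨σ, hσ⟩, ?_⟩
    refine (prod_coord_le N ν Ld (k + 1) σ hσ ω).trans ?_
    exact pow_le_pow_left₀ (Finset.prod_nonneg fun j _ => lam_nonneg ..) hle N
  have hpow : δ ^ t = C ^ (N * t) * ρ ^ (-((((k + 1) * N : ℕ) : ℝ) * t)) := by
    rw [hδ, div_pow, ← pow_mul, Real.div_rpow (by positivity) (by positivity), ← Real.rpow_natCast,
      ← Real.rpow_natCast, ← Real.rpow_mul hC.le, ← Real.rpow_mul hρ0.le, Real.rpow_neg hρ0.le,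
      div_eq_mul_inv]
  unfold tailProb
  refine ENNReal.toReal_le_of_le_ofReal (mul_nonneg (Finset.sum_nonneg fun σ _ =>
    mul_nonneg (hK0 σ) (by positivity)) (by positivity)) ?_
  calc _ ≤ _ := measure_mono hcover
    _ ≤ _ := measure_iUnion_fintype_le _ _
    _ ≤ ∑ σ : I, ENNReal.ofReal (K σ * δ ^ t) := Finset.sum_le_sum fun σ _ => hK σ δ hδ0
    _ = ENNReal.ofReal (∑ σ : I, K σ * δ ^ t) :=
        (ENNReal.ofReal_sum_of_nonneg fun σ _ => mul_nonneg (hK0 σ) (by positivity)).symm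
    _ = _ := by
        rw [Finset.sum_mul]
        simp_rw [hpow, mul_assoc]

/-! ### Lower bound -/

/-- It suffices that, for some linear automorphism `Φ`, the sum exceeds `m` whenever `Φ ω` lies in
the box with half-width `ε / √ρ` in `r * N` complex directions. -/
lemma le_tailProb_of_box (N ν Ld r : ℕ) (hr : r ≤ ν + 1) (m ε : ℝ) (hε : 0 < ε) (hε1 : ε ≤ 1)
    (Φ : (Fin (ν + 1) × Fin N → ℝ × ℝ) ≃ₗ[ℝ] (Fin (ν + 1) × Fin N → ℝ × ℝ))
    (hΦ : ∀ ρ : ℝ, 1 ≤ ρ → ∀ ω, Φ ω ∈ boxSet (firstIdx N ν r : Set _) (ε / √ρ) →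
      m < ∑ q : Fin Ld, 1 / (1 + ρ * lam N ν Ld ω q)) :
    ∃ c : ℝ, 0 < c ∧ ∀ ρ : ℝ, 1 ≤ ρ → c * ρ ^ (-((r * N : ℕ) : ℝ)) ≤ tailProb N ν Ld m ρ := by
  obtain ⟨c, hc, hbd⟩ := le_prob_boxSet Φ (firstIdx N ν r)
  refine ⟨c * ε ^ (2 * (r * N)), by positivity, fun ρ hρ => ?_⟩
  have hρ0 : 0 < ρ := by linarith
  have hs : 1 ≤ √ρ := Real.one_le_sqrt.2 hρ
  have h1 := hbd (ε / √ρ) (by positivity) (by rw [div_le_one (by linarith)]; linarith)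
  have h2 : matrixLaw _ (Φ ⁻¹' boxSet (firstIdx N ν r : Set _) (ε / √ρ)) ≤
      matrixLaw _ {ω | m < ∑ q : Fin Ld, 1 / (1 + ρ * lam N ν Ld ω q)} :=
    measure_mono fun ω hω => hΦ ρ hρ ω hω
  have h3 := (ENNReal.ofReal_le_iff_le_toReal (measure_ne_top _ _)).1 (h1.trans h2)
  refine le_trans (le_of_eq ?_) h3
  rw [card_firstIdx N ν r hr, div_pow, pow_mul (√ρ), Real.sq_sqrt hρ0.le, Real.rpow_neg hρ0.le,
    Real.rpow_natCast, div_eq_mul_inv, mul_assoc]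

lemma sq_le_of_abs_le {x η : ℝ} (h : |x| ≤ η) : x ^ 2 ≤ η ^ 2 := by
  rw [← sq_abs]
  exact pow_le_pow_left₀ (abs_nonneg _) h 2

/-- Few small eigenvalues: `r > m` eigenvalues of order `1 / ρ` force the sum above `m`. -/
lemma le_tailProb_of_lt (N ν Ld r : ℕ) (h : ν + 1 ≤ Ld) (hr : r ≤ ν + 1) (m : ℝ) (hm : m < r) :
    ∃ c : ℝ, 0 < c ∧ ∀ ρ : ℝ, 1 ≤ ρ → c * ρ ^ (-((r * N : ℕ) : ℝ)) ≤ tailProb N ν Ld m ρ := by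
  obtain ⟨ε, hε, hε1, hmε⟩ := exists_eps (C := 2 * N) hm
  have hinj := Fin.castLE_injective h
  refine le_tailProb_of_box N ν Ld r hr m ε hε hε1 (sampleEquiv N ν Ld _ hinj) fun ρ hρ ω hω => ?_
  have hρ0 : 0 < ρ := by linarith
  have hlam : ∀ j ∈ Finset.univ.filter (fun j : Fin (ν + 1) => (j : ℕ) < r),
      1 / (1 + 2 * N * ε ^ 2) ≤ 1 / (1 + ρ * lam N ν Ld ω (Fin.castLE h j)) := by
    intro j hj
    have hle : lam N ν Ld ω (Fin.castLE h j) ≤ ∑ _l : Fin N, 2 * (ε ^ 2 / ρ) := by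
      rw [lam_sample N ν Ld _ hinj]
      refine Finset.sum_le_sum fun l _ => ?_
      have hb := (hω (j, l)).2 (by simpa [firstIdx] using hj)
      have h1 := sq_le_of_abs_le hb.1
      have h2 := sq_le_of_abs_le hb.2
      rw [div_pow, Real.sq_sqrt hρ0.le] at h1 h2
      linarith
    have h0 := lam_nonneg N ν Ld ω (Fin.castLE h j)
    have hle2 : ρ * lam N ν Ld ω (Fin.castLE h j) ≤ 2 * N * ε ^ 2 := by
      calc _ ≤ ρ * ∑ _l : Fin N, 2 * (ε ^ 2 / ρ) := by gcongr
        _ = _ := by simp; field_simp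
    gcongr
  calc m < r / (1 + 2 * N * ε ^ 2) := hmε
    _ = ∑ j ∈ Finset.univ.filter (fun j : Fin (ν + 1) => (j : ℕ) < r),
        1 / (1 + 2 * N * ε ^ 2) := by
        rw [Finset.sum_const, card_filter_lt ν r hr, nsmul_eq_mul, mul_one_div]
    _ ≤ ∑ j ∈ Finset.univ.filter (fun j : Fin (ν + 1) => (j : ℕ) < r),
        1 / (1 + ρ * lam N ν Ld ω (Fin.castLE h j)) := Finset.sum_le_sum hlam
    _ = ∑ q ∈ (Finset.univ.filter (fun j : Fin (ν + 1) => (j : ℕ) < r)).image (Fin.castLE h),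
        1 / (1 + ρ * lam N ν Ld ω q) := by
        rw [Finset.sum_image hinj.injOn]
    _ ≤ _ := Finset.sum_le_sum_of_subset_of_nonneg (Finset.subset_univ _) fun q _ _ => by
        have := lam_nonneg N ν Ld ω q
        positivity

/-- If all `ν + 1` taps have energy of order `1 / ρ`, so do all eigenvalues, and the sum comes
arbitrarily close to `Ld`. -/
lemma le_tailProb_full (N ν Ld : ℕ) (m : ℝ) (hm : m < Ld) :
    ∃ c : ℝ, 0 < c ∧ ∀ ρ : ℝ, 1 ≤ ρ →
      c * ρ ^ (-(((ν + 1) * N : ℕ) : ℝ)) ≤ tailProb N ν Ld m ρ := by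
  set C : ℝ := N * (2 * (ν + 1)) ^ 2 with hC
  obtain ⟨ε, hε, hε1, hmε⟩ := exists_eps (C := C) hm
  refine le_tailProb_of_box N ν Ld (ν + 1) le_rfl m ε hε hε1 (LinearEquiv.refl ℝ _)
    fun ρ hρ ω hω => ?_
  have hρ0 : 0 < ρ := by linarith
  have hlam : ∀ q : Fin Ld, 1 / (1 + C * ε ^ 2) ≤ 1 / (1 + ρ * lam N ν Ld ω q) := by
    intro q
    have hval : ∀ l : Fin N, ‖chanVal N ν Ld ω q l‖ ≤ 2 * (ν + 1) * (ε / √ρ) := by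
      intro l
      calc ‖chanVal N ν Ld ω q l‖ ≤ ∑ _n : Fin (ν + 1), 2 * (ε / √ρ) := by
            refine norm_sum_le_of_le _ fun n _ => ?_
            have hb := (hω (n, l)).2 (by simpa [firstIdx] using Nat.le_of_lt_succ n.2)
            have hexp : ‖Complex.exp (-(2 * (Real.pi : ℂ) * Complex.I * ((n : ℕ) : ℂ) *
                ((q : ℕ) : ℂ)) / (Ld : ℂ))‖ = 1 := by
              have : -(2 * (Real.pi : ℂ) * Complex.I * ((n : ℕ) : ℂ) * ((q : ℕ) : ℂ)) / (Ld : ℂ) =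
                  ((-(2 * Real.pi * (n : ℕ) * (q : ℕ)) / Ld : ℝ) : ℂ) * Complex.I := by
                push_cast
                ring
              rw [this, Complex.norm_exp_ofReal_mul_I]
            rw [norm_mul, hexp, mul_one]
            refine (Complex.norm_le_abs_re_add_abs_im _).trans ?_
            have hb1 : |(toC (ω (n, l))).re| ≤ ε / √ρ := hb.1
            have hb2 : |(toC (ω (n, l))).im| ≤ ε / √ρ := hb.2
            linarith
        _ = _ := by simp; ring
    have hle : ρ * lam N ν Ld ω q ≤ C * ε ^ 2 := by
      calc ρ * lam N ν Ld ω q ≤ ρ * ∑ _l : Fin N, (2 * (ν + 1)) ^ 2 * (ε ^ 2 / ρ) := by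
            refine mul_le_mul_of_nonneg_left (Finset.sum_le_sum fun l _ => ?_) hρ0.le
            have h1 := pow_le_pow_left₀ (norm_nonneg _) (hval l) 2
            rw [mul_pow, div_pow, Real.sq_sqrt hρ0.le] at h1
            rw [Complex.normSq_eq_norm_sq]
            exact h1
        _ = _ := by simp [hC]; field_simp
    have h0 := lam_nonneg N ν Ld ω q
    gcongr
  calc m < Ld / (1 + C * ε ^ 2) := hmε
    _ = ∑ _q : Fin Ld, 1 / (1 + C * ε ^ 2) := by simp [div_eq_mul_inv]
    _ ≤ _ := Finset.sum_le_sum fun q _ => hlam q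

/-! ### The diversity exponent -/

/-- The tail probability decays like `ρ ^ (-(min ⌊m⌋ ν + 1) N)`, an exponent in which the block
length does not appear. -/
lemma tendsto_tailProb (N ν Ld : ℕ) (h : ν + 1 ≤ Ld) (m : ℝ) (hm0 : 0 < m) (hm : m < Ld) :
    Tendsto (fun ρ : ℝ => Real.log (tailProb N ν Ld m ρ) / Real.log ρ) atTop
      (nhds (-(((min ⌊m⌋₊ ν + 1) * N : ℕ) : ℝ))) := by
  set k := min ⌊m⌋₊ ν with hk
  have hkν : k ≤ ν := min_le_right _ _
  have hkm : (k : ℝ) ≤ m :=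
    (Nat.cast_le.2 (min_le_left _ _)).trans (Nat.floor_le hm0.le)
  have hlow : ∃ c : ℝ, 0 < c ∧ ∀ ρ : ℝ, 1 ≤ ρ →
      c * ρ ^ (-(((k + 1) * N : ℕ) : ℝ)) ≤ tailProb N ν Ld m ρ := by
    rcases le_total ⌊m⌋₊ ν with h1 | h1
    · refine le_tailProb_of_lt N ν Ld (k + 1) h (by omega) m ?_
      rw [hk, min_eq_left h1]
      exact_mod_cast Nat.lt_floor_add_one m
    · rw [hk, min_eq_right h1]
      exact le_tailProb_full N ν Ld m hm
  obtain ⟨c, hc, hlow⟩ := hlow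
  exact tendsto_log_div_log hc hlow fun t ht0 ht1 =>
    tailProb_le N ν Ld k h hkν m hm0 hkm t ht0 ht1

/-- Consider two SIMO cyclic-prefix systems over the same quasi-static
frequency-selective channel with memory `ν` and `N` receive antennas, with data block
lengths `ν+1 ≤ L_{d1} ≤ L_{d2}`. For every real `m` with `0 < m < L_{d1}`, the
probabilities `P(∑_{q=1}^{L_{d1}} 1/(1+ρλ_q^{(1)}) > m)` and
`P(∑_{q=1}^{L_{d2}} 1/(1+ρλ_q^{(2)}) > m)` are exponentially equal as `ρ → ∞`:
the limits of `log P / log ρ` exist and coincide. -/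
theorem simo_cp_block_length_invariance (N ν Ld1 Ld2 : ℕ) (hN : 1 ≤ N)
    (h1 : ν + 1 ≤ Ld1) (h2 : Ld1 ≤ Ld2) (m : ℝ) (hm0 : 0 < m) (hm : m < Ld1) :
    ∃ d : ℝ,
      Tendsto (fun ρ : ℝ => Real.log (tailProb N ν Ld1 m ρ) / Real.log ρ) atTop
        (nhds d) ∧
      Tendsto (fun ρ : ℝ => Real.log (tailProb N ν Ld2 m ρ) / Real.log ρ) atTop
        (nhds d) := by
  have hm2 : m < Ld2 := hm.trans_le (by exact_mod_cast h2)
  exact ⟨_, tendsto_tailProb N ν Ld1 h1 m hm0 hm, tendsto_tailProb N ν Ld2 (h1.trans h2) m hm0 hm2⟩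

end
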